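/- Let λ ≥ 1/π and set α = 1/2 + i·arcosh(λπ)/π ∈ ℂ, so that sin(πα) = λπ. For x ≥ 0 define F_α(x) := (1/(Γ(1−α)Γ(1+α))) ∫₀¹ u^{−α}(1−u)^{α}(1+xu)^{−α} du (complex powers taken with the principal branch). Then F_α(x) is real for every x ≥ 0, and for any μ > 0 the real-valued function J(x) := x·F_α(x/μ²) satisfies J(x) = x − λ x² ∫₀^∞ J(t)/((t+μ²)²(t+μ²+x)) dt for every x ≥ 0, the integral converging absolutely. -/

import Mathlib

/-!
The Möbius involution `w ↦ (1 - w) / (1 + x * w)` turns the Euler integral into the symmetry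
`F_{1-α} = F_α`. Since `conj F_α = F_{conj α}`, and `conj α` is `α` or `1 - α` whenever `sin (π α)`
is real and `0 < Re α < 1`, the function `F_α` is real.

The classical integral `∫₀^∞ t ^ (-α) / (t + A) dt = A ^ (-α) π / sin (π α)` at `A = 1 + x u`
rewrites one factor of the Euler integrand. Exchanging the integrals reproduces the Euler integral
inside, and so
`F_α(x) = (sin (π α) / π) ∫₀^∞ s / ((1 + s) (1 + s + x)) F_α(s) ds`.
Subtracting this identity from its instance at `x = 0`, where `F_α(0) = 1`, and rescaling
`t = μ² s` gives the Fredholm equation.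
-/

open MeasureTheory Real Set

/-- The inverse hyperbolic cosine. -/
noncomputable def arcosh (x : ℝ) : ℝ := Real.log (x + Real.sqrt (x^2 - 1))

/-- The Gauss hypergeometric function `₂F₁(α, 1-α; 2; -x)` for complex parameter `α`
and real `x ≥ 0`, via its Euler integral with principal-branch complex powers. -/
noncomputable def FhypC (α : ℂ) (x : ℝ) : ℂ :=
  (1 / (Complex.Gamma (1 - α) * Complex.Gamma (1 + α))) *
    ∫ u in (0:ℝ)..1, (u:ℂ) ^ (-α) * ((1:ℂ) - u) ^ α * ((1:ℂ) + x * u) ^ (-α)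

section EulerIntegral

open scoped ComplexConjugate

variable {α : ℂ} {x w : ℝ}

lemma integrableOn_cpow_mul_one_sub_cpow {a b : ℂ} (ha : -1 < a.re) (hb : -1 < b.re) :
    IntegrableOn (fun u : ℝ => (u : ℂ) ^ a * ((1 - u : ℝ) : ℂ) ^ b) (Ioo 0 1) := by
  have h := Complex.betaIntegral_convergent (u := a + 1) (v := b + 1)
    (neg_lt_iff_pos_add.1 ha) (neg_lt_iff_pos_add.1 hb)
  rw [intervalIntegrable_iff_integrableOn_Ioo_of_le zero_le_one] at h
  simpa using h

lemma Gamma_mul_integral_cpow_mul_one_sub_cpow {a b : ℂ} (ha : -1 < a.re) (hb : -1 < b.re) :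
    Complex.Gamma (a + 1 + (b + 1)) * ∫ u in Ioo (0 : ℝ) 1, (u : ℂ) ^ a * ((1 - u : ℝ) : ℂ) ^ b =
      Complex.Gamma (a + 1) * Complex.Gamma (b + 1) := by
  rw [Complex.Gamma_mul_Gamma_eq_betaIntegral (neg_lt_iff_pos_add.1 ha)
    (neg_lt_iff_pos_add.1 hb), Complex.betaIntegral,
    intervalIntegral.integral_of_le zero_le_one, integral_Ioc_eq_integral_Ioo]
  simp only [add_sub_cancel_right, Complex.ofReal_sub, Complex.ofReal_one]

lemma conj_ofReal_cpow {a : ℝ} (ha : 0 ≤ a) (z : ℂ) : conj ((a : ℂ) ^ z) = (a : ℂ) ^ conj z := by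
  rw [Complex.cpow_conj _ _ (by simp [Complex.arg_ofReal_of_nonneg ha, pi_ne_zero.symm]),
    Complex.conj_ofReal]

lemma ofReal_mul_cpow {a b : ℝ} (ha : 0 ≤ a) (hb : 0 ≤ b) (z : ℂ) :
    ((a * b : ℝ) : ℂ) ^ z = (a : ℂ) ^ z * (b : ℂ) ^ z := by
  rw [Complex.ofReal_mul, Complex.mul_cpow_ofReal_nonneg ha hb]

lemma ofReal_div_cpow {a b : ℝ} (ha : 0 ≤ a) (hb : 0 ≤ b) (z : ℂ) :
    ((a / b : ℝ) : ℂ) ^ z = (a : ℂ) ^ z / (b : ℂ) ^ z := by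
  rw [Complex.ofReal_div, Complex.div_cpow_ofReal_nonneg ha hb]

lemma ofReal_cpow_ne_zero {a : ℝ} (ha : 0 < a) (z : ℂ) : (a : ℂ) ^ z ≠ 0 :=
  Complex.cpow_ne_zero_iff.2 (Or.inl (Complex.ofReal_ne_zero.2 ha.ne'))

lemma one_add_mul_pos (hx : -1 < x) (hw : w ∈ Icc (0 : ℝ) 1) : 0 < 1 + x * w := by
  rcases hw.2.eq_or_lt with rfl | hw1
  · linarith
  · nlinarith [mul_nonneg (neg_lt_iff_pos_add'.1 hx).le hw.1]

/-- The integrand `u ^ (-α) * (1 - u) ^ α * (1 + x * u) ^ (-α)` of the Euler integral, with all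
bases written as casts of real numbers. -/
noncomputable def eulerIntegrand (α : ℂ) (x u : ℝ) : ℂ :=
  (u : ℂ) ^ (-α) * ((1 - u : ℝ) : ℂ) ^ α * ((1 + x * u : ℝ) : ℂ) ^ (-α)

/-- The Euler integral of `₂F₁(α, 1 - α; 2; -x)`, without its Gamma prefactor. -/
noncomputable def eulerIntegral (α : ℂ) (x : ℝ) : ℂ := ∫ u in Ioo (0 : ℝ) 1, eulerIntegrand α x u

lemma FhypC_eq_eulerIntegral (α : ℂ) (x : ℝ) :
    FhypC α x = 1 / (Complex.Gamma (1 - α) * Complex.Gamma (1 + α)) * eulerIntegral α x := by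
  rw [FhypC, eulerIntegral, intervalIntegral.integral_of_le zero_le_one,
    integral_Ioc_eq_integral_Ioo]
  simp only [eulerIntegrand, Complex.ofReal_sub, Complex.ofReal_add, Complex.ofReal_mul,
    Complex.ofReal_one]

lemma integrableOn_eulerIntegrand (h₀ : -1 < α.re) (h₁ : α.re < 1) (hx : -1 < x) :
    IntegrableOn (eulerIntegrand α x) (Ioo 0 1) := by
  have hcont : ContinuousOn (fun u : ℝ => ((1 + x * u : ℝ) : ℂ) ^ (-α)) (Icc 0 1) :=
    ContinuousOn.cpow (by fun_prop) continuousOn_const fun u hu =>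
      Complex.ofReal_mem_slitPlane.2 (one_add_mul_pos hx hu)
  obtain ⟨c, hc⟩ := isCompact_Icc.exists_bound_of_continuousOn hcont
  have hbeta := integrableOn_cpow_mul_one_sub_cpow (a := -α) (neg_lt_neg h₁) h₀
  have hmeas : Measurable fun u : ℝ => ((1 + x * u : ℝ) : ℂ) ^ (-α) := by fun_prop
  refine hbeta.mul_bdd (c := c) hmeas.aestronglyMeasurable ?_
  filter_upwards [ae_restrict_mem measurableSet_Ioo] with u hu
  exact hc u (Ioo_subset_Icc_self hu)

lemma FhypC_zero_right (h₀ : -1 < α.re) (h₁ : α.re < 1) : FhypC α 0 = 1 := by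
  have hbeta := Gamma_mul_integral_cpow_mul_one_sub_cpow (a := -α) (neg_lt_neg h₁) h₀
  have hΓ : Complex.Gamma (-α + 1 + (α + 1)) = 1 := by
    rw [show -α + 1 + (α + 1) = (1 : ℕ) + 1 by push_cast; ring, Complex.Gamma_nat_eq_factorial,
      Nat.factorial_one, Nat.cast_one]
  rw [hΓ, one_mul, neg_add_eq_sub, add_comm α] at hbeta
  have hΓ₁ : Complex.Gamma (1 - α) ≠ 0 :=
    Complex.Gamma_ne_zero_of_re_pos (by rw [Complex.sub_re, Complex.one_re]; linarith)
  have hΓ₂ : Complex.Gamma (1 + α) ≠ 0 :=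
    Complex.Gamma_ne_zero_of_re_pos (by rw [Complex.add_re, Complex.one_re]; linarith)
  simp only [FhypC_eq_eulerIntegral, eulerIntegral, eulerIntegrand, zero_mul, add_zero,
    Complex.ofReal_one, Complex.one_cpow, mul_one, hbeta]
  exact one_div_mul_cancel (mul_ne_zero hΓ₁ hΓ₂)

lemma conj_eulerIntegral (α : ℂ) (hx : -1 < x) :
    conj (eulerIntegral α x) = eulerIntegral (conj α) x := by
  rw [eulerIntegral, eulerIntegral, ← integral_conj]
  refine setIntegral_congr_fun measurableSet_Ioo fun u hu => ?_
  simp only [eulerIntegrand, map_mul, map_neg, conj_ofReal_cpow hu.1.le,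
    conj_ofReal_cpow (sub_pos.2 hu.2).le,
    conj_ofReal_cpow (one_add_mul_pos hx (Ioo_subset_Icc_self hu)).le]

lemma conj_FhypC (α : ℂ) (hx : -1 < x) : conj (FhypC α x) = FhypC (conj α) x := by
  simp only [FhypC_eq_eulerIntegral, map_mul, map_div₀, map_one, map_sub, map_add,
    conj_eulerIntegral α hx, ← Complex.Gamma_conj]

/-- The Möbius involution `w ↦ (1 - w) / (1 + x * w)` of the unit interval. -/
noncomputable def eulerInvolution (x w : ℝ) : ℝ := (1 - w) / (1 + x * w)

lemma eulerInvolution_mem_Ioo (hx : -1 < x) (hw : w ∈ Ioo (0 : ℝ) 1) :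
    eulerInvolution x w ∈ Ioo (0 : ℝ) 1 := by
  have hp := one_add_mul_pos hx (Ioo_subset_Icc_self hw)
  refine ⟨div_pos (sub_pos.2 hw.2) hp, (div_lt_one hp).2 ?_⟩
  nlinarith [mul_pos (neg_lt_iff_pos_add.1 hx) hw.1]

lemma eulerInvolution_eulerInvolution (hx : -1 < x) (hw : w ∈ Ioo (0 : ℝ) 1) :
    eulerInvolution x (eulerInvolution x w) = w := by
  have hE : eulerInvolution x w * (1 + x * w) = 1 - w :=
    div_mul_cancel₀ _ (one_add_mul_pos hx (Ioo_subset_Icc_self hw)).ne'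
  have hp := one_add_mul_pos hx (Ioo_subset_Icc_self (eulerInvolution_mem_Ioo hx hw))
  rw [eulerInvolution, div_eq_iff hp.ne']
  linear_combination -hE

lemma bijOn_eulerInvolution (hx : -1 < x) : BijOn (eulerInvolution x) (Ioo 0 1) (Ioo 0 1) :=
  InvOn.bijOn (f' := eulerInvolution x)
    ⟨fun _ => eulerInvolution_eulerInvolution hx, fun _ => eulerInvolution_eulerInvolution hx⟩
    (fun _ => eulerInvolution_mem_Ioo hx) (fun _ => eulerInvolution_mem_Ioo hx)

lemma hasDerivAt_eulerInvolution (hx : -1 < x) (hw : w ∈ Icc (0 : ℝ) 1) :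
    HasDerivAt (eulerInvolution x) (-((1 + x) / (1 + x * w) ^ 2)) w := by
  have hp := (one_add_mul_pos hx hw).ne'
  refine (((hasDerivAt_id w).const_sub 1).div
    (((hasDerivAt_id w).const_mul x).const_add 1) hp).congr_deriv ?_
  simp only [id]
  field_simp
  ring

lemma eulerIntegrand_eq_cpow_eulerInvolution (α : ℂ) (hx : -1 < x) (hw : w ∈ Ioo (0 : ℝ) 1) :
    eulerIntegrand α x w = (w : ℂ) ^ (-α) * (eulerInvolution x w : ℂ) ^ α := by
  have hp := one_add_mul_pos hx (Ioo_subset_Icc_self hw)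
  rw [eulerIntegrand, eulerInvolution, ofReal_div_cpow (sub_pos.2 hw.2).le hp.le,
    Complex.cpow_neg, Complex.cpow_neg, mul_assoc, ← div_eq_mul_inv]

lemma eulerIntegrand_eulerInvolution (α : ℂ) (hx : -1 < x) (hw : w ∈ Ioo (0 : ℝ) 1) :
    eulerIntegrand α x (eulerInvolution x w) =
      (w : ℂ) ^ α * (eulerInvolution x w : ℂ) ^ (-α) := by
  rw [eulerIntegrand_eq_cpow_eulerInvolution α hx (eulerInvolution_mem_Ioo hx hw),
    eulerInvolution_eulerInvolution hx hw, mul_comm]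

lemma integrableOn_deriv_smul_eulerIntegrand_eulerInvolution (h₀ : -1 < α.re) (h₁ : α.re < 1)
    (hx : -1 < x) :
    IntegrableOn (fun w => |-((1 + x) / (1 + x * w) ^ 2)| •
      eulerIntegrand α x (eulerInvolution x w)) (Ioo 0 1) := by
  refine (integrableOn_image_iff_integrableOn_abs_deriv_smul measurableSet_Ioo
    (fun w hw => (hasDerivAt_eulerInvolution hx (Ioo_subset_Icc_self hw)).hasDerivWithinAt)
    (bijOn_eulerInvolution hx).injOn _).1 ?_
  rw [(bijOn_eulerInvolution hx).image_eq]
  exact integrableOn_eulerIntegrand h₀ h₁ hx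

lemma integral_deriv_smul_eulerIntegrand_eulerInvolution (α : ℂ) (hx : -1 < x) :
    ∫ w in Ioo (0 : ℝ) 1, |-((1 + x) / (1 + x * w) ^ 2)| •
      eulerIntegrand α x (eulerInvolution x w) = eulerIntegral α x := by
  rw [eulerIntegral, ← integral_image_eq_integral_abs_deriv_smul measurableSet_Ioo
    (fun w hw => (hasDerivAt_eulerInvolution hx (Ioo_subset_Icc_self hw)).hasDerivWithinAt)
    (bijOn_eulerInvolution hx).injOn, (bijOn_eulerInvolution hx).image_eq]

lemma hasDerivAt_cpow_mul_eulerInvolution_cpow (h₀ : α ≠ 0) (h₁ : α ≠ 1) (hx : -1 < x)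
    (hw : w ∈ Ioo (0 : ℝ) 1) :
    HasDerivAt (fun y : ℝ => (y : ℂ) ^ α * (eulerInvolution x y : ℂ) ^ (1 - α))
      (α * eulerIntegrand (1 - α) x w - (1 - α) * (|-((1 + x) / (1 + x * w) ^ 2)| •
        eulerIntegrand α x (eulerInvolution x w))) w := by
  have hE := eulerInvolution_mem_Ioo hx hw
  have hpow := hasDerivAt_ofReal_cpow_const hw.1.ne' h₀
  have hpowE := (hasDerivAt_ofReal_cpow_const hE.1.ne' (sub_ne_zero.2 h₁.symm)).scomp w
    (hasDerivAt_eulerInvolution hx (Ioo_subset_Icc_self hw))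
  refine (hpow.mul hpowE).congr_deriv ?_
  have hx1 : 0 < 1 + x := neg_lt_iff_pos_add'.1 hx
  rw [eulerIntegrand_eulerInvolution α hx hw, eulerIntegrand_eq_cpow_eulerInvolution _ hx hw,
    abs_neg, abs_of_nonneg (by positivity), neg_sub]
  simp only [Function.comp_apply, Complex.real_smul, sub_sub_cancel_left, Complex.ofReal_neg]
  ring

-- Integrate the derivative of `w ^ α * ((1 - w) / (1 + x * w)) ^ (1 - α)`, which vanishes at both
-- ends of `[0, 1]`.
lemma mul_eulerIntegral_one_sub (h₀ : 0 < α.re) (h₁ : α.re < 1) (hx : -1 < x) :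
    α * eulerIntegral (1 - α) x = (1 - α) * eulerIntegral α x := by
  have hα₀ : α ≠ 0 := by rintro rfl; exact h₀.ne rfl
  have hα₁ : α ≠ 1 := by rintro rfl; exact h₁.ne rfl
  have hre : 0 < (1 - α).re := by rwa [Complex.sub_re, Complex.one_re, sub_pos]
  have hcont : ContinuousOn
      (fun w : ℝ => (w : ℂ) ^ α * (eulerInvolution x w : ℂ) ^ (1 - α)) (Icc 0 1) :=
    (Complex.continuous_ofReal_cpow_const h₀).continuousOn.mul
      ((Complex.continuous_ofReal_cpow_const hre).comp_continuousOn fun w hw =>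
        (hasDerivAt_eulerInvolution hx hw).continuousAt.continuousWithinAt)
  have hint := (integrableOn_eulerIntegrand (α := 1 - α) (by linarith)
    (by simpa using h₀) hx).const_mul α
  have hint' := (integrableOn_deriv_smul_eulerIntegrand_eulerInvolution
    (by linarith) h₁ hx).const_mul (1 - α)
  have hftc := intervalIntegral.integral_eq_sub_of_hasDerivAt_of_le zero_le_one hcont
    (fun w hw => hasDerivAt_cpow_mul_eulerInvolution_cpow hα₀ hα₁ hx hw)
    ((intervalIntegrable_iff_integrableOn_Ioo_of_le zero_le_one).2 (hint.sub hint'))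
  rw [intervalIntegral.integral_of_le zero_le_one, integral_Ioc_eq_integral_Ioo,
    integral_sub hint hint', integral_const_mul, integral_const_mul,
    integral_deriv_smul_eulerIntegrand_eulerInvolution α hx, eulerInvolution, sub_self, zero_div,
    Complex.ofReal_zero, Complex.zero_cpow hα₀, Complex.zero_cpow (sub_ne_zero.2 hα₁.symm),
    mul_zero, zero_mul, sub_zero] at hftc
  exact sub_eq_zero.1 hftc

theorem FhypC_one_sub (h₀ : 0 < α.re) (h₁ : α.re < 1) (hx : -1 < x) :
    FhypC (1 - α) x = FhypC α x := by
  have hα₀ : α ≠ 0 := by rintro rfl; exact h₀.ne rfl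
  have hα₁ : 1 - α ≠ 0 := sub_ne_zero.2 (by rintro rfl; exact h₁.ne rfl)
  have hsymm : eulerIntegral (1 - α) x = (1 - α) * eulerIntegral α x / α := by
    rw [eq_div_iff hα₀, mul_comm, mul_eulerIntegral_one_sub h₀ h₁ hx]
  rw [FhypC_eq_eulerIntegral, FhypC_eq_eulerIntegral, hsymm, sub_sub_cancel, add_comm 1 (1 - α),
    Complex.Gamma_add_one _ hα₁, add_comm 1 α, Complex.Gamma_add_one _ hα₀]
  field_simp

lemma conj_eq_self_or_conj_eq_one_sub_of_sin_pi_mul_real {r : ℝ} (h₀ : 0 < α.re)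
    (h₁ : α.re < 1) (hr : Complex.sin (π * α) = r) : conj α = α ∨ conj α = 1 - α := by
  have hπ : (π : ℂ) ≠ 0 := Complex.ofReal_ne_zero.2 pi_ne_zero
  have hsin : Complex.sin (π * α) = Complex.sin (π * conj α) := by
    rw [← Complex.conj_ofReal π, ← map_mul, Complex.sin_conj, Complex.conj_ofReal, hr,
      Complex.conj_ofReal]
  obtain ⟨k, hk | hk⟩ := Complex.sin_eq_sin_iff.1 hsin
  · have hα : conj α = 2 * k + α := mul_left_cancel₀ hπ (by linear_combination hk)
    have hk0 : (k : ℝ) = 0 := by simpa using congrArg Complex.re hα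
    left
    rw [hα, ← Complex.ofReal_intCast, hk0, Complex.ofReal_zero, mul_zero, zero_add]
  · have hα : conj α = 2 * k + 1 - α := mul_left_cancel₀ hπ (by linear_combination hk)
    have hre : α.re = 2 * k + 1 - α.re := by simpa using congrArg Complex.re hα
    have hk_gt : (-1 : ℝ) < k := by linarith
    have hk_lt : (k : ℝ) < 1 := by linarith
    have hk0 : k = 0 := by
      norm_cast at hk_gt hk_lt
      omega
    right
    rw [hα, hk0, Int.cast_zero, mul_zero, zero_add]

theorem FhypC_im_eq_zero {r : ℝ} (h₀ : 0 < α.re) (h₁ : α.re < 1)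
    (hr : Complex.sin (π * α) = r) (hx : -1 < x) : (FhypC α x).im = 0 := by
  rw [← Complex.conj_eq_iff_im, conj_FhypC α hx]
  rcases conj_eq_self_or_conj_eq_one_sub_of_sin_pi_mul_real h₀ h₁ hr with h | h
  · rw [h]
  · rw [h, FhypC_one_sub h₀ h₁ hx]

end EulerIntegral

section Stieltjes

variable {α : ℂ} {x u s A : ℝ}

lemma bijOn_mul_div_one_sub (hA : 0 < A) :
    BijOn (fun v : ℝ => A * (v / (1 - v))) (Ioo 0 1) (Ioi 0) := by
  have hmaps : MapsTo (fun v : ℝ => A * (v / (1 - v))) (Ioo 0 1) (Ioi 0) := fun v hv =>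
    mul_pos hA (div_pos hv.1 (sub_pos.2 hv.2))
  have hmaps' : MapsTo (fun t : ℝ => t / (A + t)) (Ioi 0) (Ioo 0 1) := fun t ht =>
    ⟨div_pos ht (add_pos hA ht), (div_lt_one (add_pos hA ht)).2 (lt_add_of_pos_left t hA)⟩
  refine InvOn.bijOn (f' := fun t => t / (A + t)) ⟨fun v hv => ?_, fun t ht => ?_⟩ hmaps hmaps'
  · have hv1 : 1 - v ≠ 0 := (sub_pos.2 hv.2).ne'
    have hsum : A + A * (v / (1 - v)) = A / (1 - v) := by
      field_simp
      ring
    simp only [hsum]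
    field_simp
  · have hsum : A + t ≠ 0 := (add_pos hA ht).ne'
    have hsub : 1 - t / (A + t) = A / (A + t) := by
      field_simp
      ring
    simp only [hsub]
    field_simp

lemma hasDerivAt_mul_div_one_sub (A : ℝ) {v : ℝ} (hv : v ≠ 1) :
    HasDerivAt (fun v : ℝ => A * (v / (1 - v))) (A / (1 - v) ^ 2) v := by
  have hv1 : 1 - v ≠ 0 := sub_ne_zero.2 hv.symm
  refine (((hasDerivAt_id v).div ((hasDerivAt_id v).const_sub 1) hv1).const_mul A).congr_deriv ?_
  simp only [id]
  field_simp
  ring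

lemma deriv_smul_cpow_neg_div_add_mul_div_one_sub (α : ℂ) (hA : 0 < A) {v : ℝ}
    (hv : v ∈ Ioo (0 : ℝ) 1) :
    |A / (1 - v) ^ 2| •
      (((A * (v / (1 - v)) : ℝ) : ℂ) ^ (-α) / ((A * (v / (1 - v)) + A : ℝ) : ℂ)) =
      (A : ℂ) ^ (-α) * ((v : ℂ) ^ (-α) * ((1 - v : ℝ) : ℂ) ^ (α - 1)) := by
  have hv1 : 0 < 1 - v := sub_pos.2 hv.2
  have hv1' : ((1 - v : ℝ) : ℂ) ≠ 0 := Complex.ofReal_ne_zero.2 hv1.ne'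
  have hA' : (A : ℂ) ≠ 0 := Complex.ofReal_ne_zero.2 hA.ne'
  have hsum : A * (v / (1 - v)) + A = A / (1 - v) := by
    field_simp
    ring
  rw [hsum, abs_of_pos (by positivity), Complex.real_smul,
    ofReal_mul_cpow hA.le (div_pos hv.1 hv1).le, ofReal_div_cpow hv.1.le hv1.le,
    Complex.cpow_sub _ _ hv1', Complex.cpow_one, Complex.cpow_neg ((1 - v : ℝ) : ℂ),
    Complex.ofReal_div, Complex.ofReal_div, Complex.ofReal_pow]
  generalize ((1 - v : ℝ) : ℂ) = b at *
  field_simp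

lemma integrableOn_cpow_neg_div_add (h₀ : 0 < α.re) (h₁ : α.re < 1) (hA : 0 < A) :
    IntegrableOn (fun t : ℝ => (t : ℂ) ^ (-α) / ((t + A : ℝ) : ℂ)) (Ioi 0) := by
  rw [← (bijOn_mul_div_one_sub hA).image_eq]
  refine (integrableOn_image_iff_integrableOn_abs_deriv_smul measurableSet_Ioo
    (fun v hv => (hasDerivAt_mul_div_one_sub A hv.2.ne).hasDerivWithinAt)
    (bijOn_mul_div_one_sub hA).injOn _).2 ?_
  refine IntegrableOn.congr_fun ?_
    (fun v hv => (deriv_smul_cpow_neg_div_add_mul_div_one_sub α hA hv).symm) measurableSet_Ioo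
  exact (integrableOn_cpow_mul_one_sub_cpow (neg_lt_neg h₁) (by simpa using h₀)).const_mul _

lemma integral_cpow_neg_div_add (h₀ : 0 < α.re) (h₁ : α.re < 1) (hA : 0 < A) :
    ∫ t in Ioi (0 : ℝ), (t : ℂ) ^ (-α) / ((t + A : ℝ) : ℂ) =
      (A : ℂ) ^ (-α) * (π / Complex.sin (π * α)) := by
  have hbeta := Gamma_mul_integral_cpow_mul_one_sub_cpow (a := -α) (b := α - 1)
    (neg_lt_neg h₁) (by simpa using h₀)
  rw [sub_add_cancel, neg_add_cancel_comm, Complex.Gamma_one, one_mul, neg_add_eq_sub,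
    mul_comm (Complex.Gamma _), Complex.Gamma_mul_Gamma_one_sub] at hbeta
  rw [← (bijOn_mul_div_one_sub hA).image_eq,
    integral_image_eq_integral_abs_deriv_smul measurableSet_Ioo
      (fun v hv => (hasDerivAt_mul_div_one_sub A hv.2.ne).hasDerivWithinAt)
      (bijOn_mul_div_one_sub hA).injOn,
    setIntegral_congr_fun measurableSet_Ioo
      (fun v hv => deriv_smul_cpow_neg_div_add_mul_div_one_sub α hA hv),
    integral_const_mul, hbeta]

/-- The kernel on `(0, 1) × (0, ∞)` whose `s`-integrals give the Euler integrand at `x` and whose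
`u`-integrals give the Euler integral at `s` divided by `1 + s + x`, up to explicit factors. The
power of `u * (1 + s) - 1` is cut off to zero where its base is not positive. -/
noncomputable def stieltjesKernel (α : ℂ) (x u s : ℝ) : ℂ :=
  (u : ℂ) ^ (-α) * ((1 - u : ℝ) : ℂ) ^ α *
    ((Ioi (0 : ℝ)).indicator (fun t => (t : ℂ) ^ (-α)) (u * (1 + s) - 1) / ((1 + s + x : ℝ) : ℂ))

lemma measurable_uncurry_stieltjesKernel (α : ℂ) (x : ℝ) :
    Measurable (Function.uncurry (stieltjesKernel α x)) := by
  have hpow : Measurable ((Ioi (0 : ℝ)).indicator fun t : ℝ => (t : ℂ) ^ (-α)) :=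
    Measurable.indicator (by fun_prop) measurableSet_Ioi
  unfold stieltjesKernel Function.uncurry
  fun_prop

lemma stieltjesKernel_eq_zero (α : ℂ) (x : ℝ) (h : u * (1 + s) ≤ 1) :
    stieltjesKernel α x u s = 0 := by
  rw [stieltjesKernel, indicator_of_notMem (notMem_Ioi.2 (sub_nonpos.2 h)), zero_div, mul_zero]

lemma stieltjesKernel_eq_indicator_comp (α : ℂ) (x : ℝ) (hu : 0 < u) (s : ℝ) :
    stieltjesKernel α x u s = (u : ℂ) ^ (-α) * ((1 - u : ℝ) : ℂ) ^ α * u *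
      (Ioi (0 : ℝ)).indicator (fun t => (t : ℂ) ^ (-α) / ((t + (1 + x * u) : ℝ) : ℂ))
        (u * s + (u - 1)) := by
  have hu' : (u : ℂ) ≠ 0 := Complex.ofReal_ne_zero.2 hu.ne'
  have ht : u * (1 + s) - 1 = u * s + (u - 1) := by ring
  have hden : u * s + (u - 1) + (1 + x * u) = u * (1 + s + x) := by ring
  rw [stieltjesKernel, ht]
  by_cases hpos : u * s + (u - 1) ∈ Ioi (0 : ℝ)
  · rw [indicator_of_mem hpos, indicator_of_mem hpos, hden, Complex.ofReal_mul u,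
      mul_assoc _ (u : ℂ), mul_div (u : ℂ), mul_div_mul_left _ _ hu']
  · rw [indicator_of_notMem hpos, indicator_of_notMem hpos, zero_div, mul_zero, mul_zero]

lemma integrable_stieltjesKernel (h₀ : 0 < α.re) (h₁ : α.re < 1) (hx : -1 < x)
    (hu : u ∈ Ioo (0 : ℝ) 1) : Integrable (stieltjesKernel α x u) := by
  have hbase := (integrable_indicator_iff measurableSet_Ioi).2
    (integrableOn_cpow_neg_div_add h₀ h₁ (one_add_mul_pos hx (Ioo_subset_Icc_self hu)))
  refine (((hbase.comp_add_right (u - 1)).comp_mul_left' hu.1.ne').const_mul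
    ((u : ℂ) ^ (-α) * ((1 - u : ℝ) : ℂ) ^ α * u)).congr ?_
  exact .of_forall fun s => (stieltjesKernel_eq_indicator_comp α x hu.1 s).symm

lemma integral_stieltjesKernel_right (h₀ : 0 < α.re) (h₁ : α.re < 1) (hx : -1 < x)
    (hu : u ∈ Ioo (0 : ℝ) 1) :
    ∫ s in Ioi 0, stieltjesKernel α x u s =
      eulerIntegrand α x u * (π / Complex.sin (π * α)) := by
  have hu' : (u : ℂ) ≠ 0 := Complex.ofReal_ne_zero.2 hu.1.ne'
  have hsupp : ∀ s ∉ Ioi (0 : ℝ), stieltjesKernel α x u s = 0 := fun s hs =>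
    stieltjesKernel_eq_zero α x (by nlinarith [notMem_Ioi.1 hs, hu.1, hu.2])
  have hcomp := Measure.integral_comp_mul_left (fun t : ℝ =>
    (Ioi (0 : ℝ)).indicator (fun t => (t : ℂ) ^ (-α) / ((t + (1 + x * u) : ℝ) : ℂ))
      (t + (u - 1))) u
  rw [integral_add_right_eq_self, integral_indicator measurableSet_Ioi,
    integral_cpow_neg_div_add h₀ h₁ (one_add_mul_pos hx (Ioo_subset_Icc_self hu)),
    abs_of_pos (inv_pos.2 hu.1), Complex.real_smul, Complex.ofReal_inv] at hcomp
  rw [setIntegral_eq_integral_of_forall_compl_eq_zero hsupp]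
  simp only [stieltjesKernel_eq_indicator_comp α x hu.1]
  rw [integral_const_mul, hcomp, eulerIntegrand]
  field_simp

lemma stieltjesKernel_one_add_mul_div (α : ℂ) (x : ℝ) (hs : 0 < s) {v : ℝ}
    (hv : v ∈ Ioo (0 : ℝ) 1) :
    stieltjesKernel α x ((1 + s * v) / (1 + s)) s =
      eulerIntegrand α s v / ((1 + s + x : ℝ) : ℂ) := by
  have hs1 : 0 < 1 + s := by linarith
  have hv1 : 0 < 1 - v := sub_pos.2 hv.2
  have hsv : 0 < s * v := mul_pos hs hv.1
  have hsub : 1 - (1 + s * v) / (1 + s) = s * (1 - v) / (1 + s) := by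
    field_simp
    ring
  have hbase : (1 + s * v) / (1 + s) * (1 + s) - 1 = s * v := by
    rw [div_mul_cancel₀ _ hs1.ne', add_sub_cancel_left]
  have hspow := ofReal_cpow_ne_zero hs α
  have hspow1 := ofReal_cpow_ne_zero hs1 α
  rw [stieltjesKernel, eulerIntegrand, hsub, hbase, indicator_of_mem (mem_Ioi.2 hsv),
    ofReal_div_cpow (by positivity) hs1.le, ofReal_div_cpow (by positivity) hs1.le,
    ofReal_mul_cpow hs.le hv1.le, ofReal_mul_cpow hs.le hv.1.le, Complex.cpow_neg (s : ℂ),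
    Complex.cpow_neg ((1 + s : ℝ) : ℂ)]
  field_simp

lemma integral_stieltjesKernel_left (α : ℂ) (x : ℝ) (hs : 0 < s) :
    ∫ u in Ioo (0 : ℝ) 1, stieltjesKernel α x u s =
      ((s / ((1 + s) * (1 + s + x)) : ℝ) : ℂ) * eulerIntegral α s := by
  have hs1 : 0 < 1 + s := by linarith
  have hlt : 1 / (1 + s) < 1 := (div_lt_one hs1).2 (lt_add_of_pos_right 1 hs)
  have hsubset : Ioo (1 / (1 + s)) 1 ⊆ Ioo (0 : ℝ) 1 := Ioo_subset_Ioo_left (by positivity)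
  have hsupp : ∀ u ∈ Ioo (0 : ℝ) 1 \ Ioo (1 / (1 + s)) 1, stieltjesKernel α x u s = 0 :=
    fun u hu => stieltjesKernel_eq_zero α x <| (le_div_iff₀ hs1).1 <|
      not_lt.1 fun h => hu.2 ⟨h, hu.1.2⟩
  have hsubst := intervalIntegral.smul_integral_comp_mul_add (a := 0) (b := 1)
    (fun u => stieltjesKernel α x u s) (s / (1 + s)) (1 / (1 + s))
  rw [show s / (1 + s) * 1 + 1 / (1 + s) = 1 by field_simp; ring, mul_zero, zero_add,
    intervalIntegral.integral_of_le hlt.le, intervalIntegral.integral_of_le zero_le_one,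
    integral_Ioc_eq_integral_Ioo, integral_Ioc_eq_integral_Ioo] at hsubst
  rw [setIntegral_eq_of_subset_of_forall_sdiff_eq_zero measurableSet_Ioo hsubset hsupp, ← hsubst,
    setIntegral_congr_fun (g := fun v => eulerIntegrand α s v / ((1 + s + x : ℝ) : ℂ))
      measurableSet_Ioo fun v hv => ?_, integral_div, eulerIntegral, ← div_div,
    Complex.ofReal_div (s / (1 + s)), Complex.real_smul, div_mul_eq_mul_div, mul_div_assoc]
  beta_reduce
  rw [← stieltjesKernel_one_add_mul_div α x hs hv, div_mul_eq_mul_div, ← add_div, add_comm]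

lemma ofReal_norm_stieltjesKernel (α : ℂ) (hx : -1 < x) (hu : u ∈ Ioo (0 : ℝ) 1) (hs : 0 < s) :
    (‖stieltjesKernel α x u s‖ : ℂ) = stieltjesKernel α.re x u s := by
  have hu1 : 0 < 1 - u := sub_pos.2 hu.2
  have hsx : 0 < 1 + s + x := by linarith
  rcases le_or_gt (u * (1 + s)) 1 with h | h
  · simp only [stieltjesKernel_eq_zero _ _ h, norm_zero, Complex.ofReal_zero]
  · have ht : 0 < u * (1 + s) - 1 := sub_pos.2 h
    rw [stieltjesKernel, stieltjesKernel, indicator_of_mem (mem_Ioi.2 ht),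
      indicator_of_mem (mem_Ioi.2 ht), norm_mul, norm_mul, norm_div,
      Complex.norm_cpow_eq_rpow_re_of_pos hu.1, Complex.norm_cpow_eq_rpow_re_of_pos hu1,
      Complex.norm_cpow_eq_rpow_re_of_pos ht, Complex.norm_of_nonneg hsx.le, Complex.neg_re,
      Complex.ofReal_mul, Complex.ofReal_mul, Complex.ofReal_div, Complex.ofReal_cpow hu.1.le,
      Complex.ofReal_cpow hu1.le, Complex.ofReal_cpow ht.le, Complex.ofReal_neg]

lemma integrable_uncurry_stieltjesKernel (h₀ : 0 < α.re) (h₁ : α.re < 1) (hx : -1 < x) :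
    Integrable (Function.uncurry (stieltjesKernel α x))
      ((volume.restrict (Ioo 0 1)).prod (volume.restrict (Ioi 0))) := by
  refine (integrable_prod_iff
    (measurable_uncurry_stieltjesKernel α x).aestronglyMeasurable).2 ⟨?_, ?_⟩
  · filter_upwards [ae_restrict_mem measurableSet_Ioo] with u hu
    exact (integrable_stieltjesKernel h₀ h₁ hx hu).integrableOn
  · have hnorm : ∀ u ∈ Ioo (0 : ℝ) 1, eulerIntegrand α.re x u * (π / Complex.sin (π * α.re)) =
        ((∫ s in Ioi 0, ‖stieltjesKernel α x u s‖ : ℝ) : ℂ) := fun u hu => by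
      rw [← integral_stieltjesKernel_right (α := α.re) h₀ h₁ hx hu, ← integral_complex_ofReal]
      exact setIntegral_congr_fun measurableSet_Ioi fun s hs =>
        (ofReal_norm_stieltjesKernel α hx hu hs).symm
    have hint := (integrableOn_eulerIntegrand (α := α.re) (x := x) (by simpa using by linarith)
      h₁ hx).mul_const (π / Complex.sin (π * α.re))
    exact (IntegrableOn.congr_fun hint hnorm measurableSet_Ioo).re

lemma integrableOn_mul_FhypC (h₀ : 0 < α.re) (h₁ : α.re < 1) (hx : -1 < x) :
    IntegrableOn (fun s : ℝ => ((s / ((1 + s) * (1 + s + x)) : ℝ) : ℂ) * FhypC α s) (Ioi 0) := by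
  have h := (integrable_uncurry_stieltjesKernel h₀ h₁ hx).integral_prod_right.const_mul
    (1 / (Complex.Gamma (1 - α) * Complex.Gamma (1 + α)))
  refine IntegrableOn.congr_fun h (fun s hs => ?_) measurableSet_Ioi
  simp only [Function.uncurry, integral_stieltjesKernel_left α x hs, FhypC_eq_eulerIntegral]
  ring

lemma mem_integerComplement_of_re_pos_of_re_lt_one (h₀ : 0 < α.re) (h₁ : α.re < 1) :
    α ∈ Complex.integerComplement := by
  rintro ⟨n, rfl⟩
  rw [Complex.intCast_re] at h₀ h₁
  norm_cast at h₀ h₁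
  omega

theorem FhypC_eq_stieltjes (h₀ : 0 < α.re) (h₁ : α.re < 1) (hx : -1 < x) :
    FhypC α x = Complex.sin (π * α) / π *
      ∫ s in Ioi (0 : ℝ), ((s / ((1 + s) * (1 + s + x)) : ℝ) : ℂ) * FhypC α s := by
  have hswap := integral_integral_swap (integrable_uncurry_stieltjesKernel h₀ h₁ hx)
  rw [setIntegral_congr_fun measurableSet_Ioo
      fun u hu => integral_stieltjesKernel_right h₀ h₁ hx hu, integral_mul_const,
    setIntegral_congr_fun measurableSet_Ioi fun s hs => integral_stieltjesKernel_left α x hs,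
    ← eulerIntegral] at hswap
  have hcancel : Complex.sin (π * α) / π * (π / Complex.sin (π * α)) = 1 := by
    rw [← inv_div (Complex.sin (π * α)), mul_inv_cancel₀]
    exact div_ne_zero
      (sin_pi_mul_ne_zero (mem_integerComplement_of_re_pos_of_re_lt_one h₀ h₁))
      (Complex.ofReal_ne_zero.2 pi_ne_zero)
  simp only [FhypC_eq_eulerIntegral, mul_left_comm _ (1 / _ : ℂ)]
  rw [integral_const_mul, ← hswap, mul_left_comm, mul_left_comm _ (eulerIntegral α x), hcancel,
    mul_one]

end Stieltjes

section Fredholm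

variable {α : ℂ} {x lam : ℝ}

lemma stieltjes_weight_zero_sub {s : ℝ} (hx : -1 < x) (hs : 0 < s) :
    s / ((1 + s) * (1 + s + 0)) - s / ((1 + s) * (1 + s + x)) =
      x * (s / ((1 + s) ^ 2 * (1 + s + x))) := by
  have hs1 : 1 + s ≠ 0 := by positivity
  have hsx : 1 + s + x ≠ 0 := by linarith
  field_simp
  ring

lemma integrableOn_mul_FhypC_div_sq (h₀ : 0 < α.re) (h₁ : α.re < 1) (hx : -1 < x) :
    IntegrableOn (fun s : ℝ => ((s / ((1 + s) ^ 2 * (1 + s + x)) : ℝ) : ℂ) * FhypC α s)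
      (Ioi 0) := by
  have hbound : ∀ᵐ s ∂volume.restrict (Ioi (0 : ℝ)), ‖(((1 + s)⁻¹ : ℝ) : ℂ)‖ ≤ 1 := by
    filter_upwards [ae_restrict_mem measurableSet_Ioi] with s hs
    rw [mem_Ioi] at hs
    rw [Complex.norm_of_nonneg (by positivity)]
    exact inv_le_one_of_one_le₀ (by linarith)
  have hmeas : Measurable fun s : ℝ => (((1 + s)⁻¹ : ℝ) : ℂ) := by fun_prop
  refine ((integrableOn_mul_FhypC h₀ h₁ hx).bdd_mul hmeas.aestronglyMeasurable hbound).congr ?_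
  refine .of_forall fun s => ?_
  beta_reduce
  rw [← mul_assoc, ← Complex.ofReal_mul, inv_mul_eq_div, div_div, mul_right_comm, ← sq]

theorem FhypC_eq_one_sub (h₀ : 0 < α.re) (h₁ : α.re < 1) (hx : -1 < x) :
    FhypC α x = 1 - Complex.sin (π * α) / π * (x *
      ∫ s in Ioi (0 : ℝ), ((s / ((1 + s) ^ 2 * (1 + s + x)) : ℝ) : ℂ) * FhypC α s) := by
  have hzero := FhypC_eq_stieltjes h₀ h₁ neg_one_lt_zero
  rw [FhypC_zero_right (by linarith) h₁] at hzero
  rw [eq_sub_iff_add_eq', ← eq_sub_iff_add_eq, FhypC_eq_stieltjes h₀ h₁ hx, hzero, ← mul_sub,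
    ← integral_sub (integrableOn_mul_FhypC h₀ h₁ neg_one_lt_zero) (integrableOn_mul_FhypC h₀ h₁ hx),
    ← integral_const_mul]
  congr 1
  refine setIntegral_congr_fun measurableSet_Ioi fun s hs => ?_
  rw [← sub_mul, ← Complex.ofReal_sub, stieltjes_weight_zero_sub hx hs, Complex.ofReal_mul,
    mul_assoc]

lemma integrableOn_mul_re_FhypC_div_sq (h₀ : 0 < α.re) (h₁ : α.re < 1) (hx : -1 < x) :
    IntegrableOn (fun s : ℝ => s / ((1 + s) ^ 2 * (1 + s + x)) * (FhypC α s).re) (Ioi 0) := by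
  have h : IntegrableOn (fun s : ℝ =>
      (((s / ((1 + s) ^ 2 * (1 + s + x)) : ℝ) : ℂ) * FhypC α s).re) (Ioi 0) :=
    (integrableOn_mul_FhypC_div_sq h₀ h₁ hx).re
  simpa only [Complex.re_ofReal_mul] using h

lemma re_FhypC_eq_one_sub (h₀ : 0 < α.re) (h₁ : α.re < 1)
    (hsin : Complex.sin (π * α) = (lam * π : ℝ)) (hx : -1 < x) :
    (FhypC α x).re = 1 - lam * (x *
      ∫ s in Ioi (0 : ℝ), s / ((1 + s) ^ 2 * (1 + s + x)) * (FhypC α s).re) := by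
  have hcoeff : Complex.sin (π * α) / π = lam := by
    rw [hsin, ← Complex.ofReal_div, mul_div_cancel_right₀ _ pi_ne_zero]
  have hint := integral_re (integrableOn_mul_FhypC_div_sq h₀ h₁ hx)
  simp only [RCLike.re_to_complex, Complex.re_ofReal_mul] at hint
  rw [FhypC_eq_one_sub h₀ h₁ hx, hcoeff, Complex.sub_re, Complex.one_re, Complex.re_ofReal_mul,
    Complex.re_ofReal_mul, ← hint]

lemma fredholm_integrand_eq_rescaled (f : ℝ → ℝ) {m : ℝ} (hm : m ≠ 0) (t : ℝ) :
    t * f (t / m) / ((t + m) ^ 2 * (t + m + x)) = (m ^ 2)⁻¹ *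
      (m⁻¹ * t / ((1 + m⁻¹ * t) ^ 2 * (1 + m⁻¹ * t + x / m)) * f (m⁻¹ * t)) := by
  have hsum : 1 + m⁻¹ * t = (t + m) / m := by
    field_simp
    ring
  rw [hsum, ← add_div, inv_mul_eq_div]
  field_simp

theorem fredholm_solution_strong_coupling_general (h₀ : 0 < α.re) (h₁ : α.re < 1)
    (hsin : Complex.sin (π * α) = (lam * π : ℝ)) :
    (∀ x : ℝ, -1 < x → (FhypC α x).im = 0) ∧
    ∀ μ : ℝ, 0 < μ →
      ∀ J : ℝ → ℝ, (∀ x, J x = x * (FhypC α (x / μ ^ 2)).re) →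
      ∀ x : ℝ, -μ ^ 2 < x →
        IntegrableOn (fun t => J t / ((t + μ ^ 2) ^ 2 * (t + μ ^ 2 + x))) (Ioi 0) ∧
        J x = x - lam * x ^ 2 *
          ∫ t in Ioi (0 : ℝ), J t / ((t + μ ^ 2) ^ 2 * (t + μ ^ 2 + x)) := by
  refine ⟨fun x => FhypC_im_eq_zero h₀ h₁ hsin, fun μ hμ J hJ x hx => ?_⟩
  have hm : 0 < μ ^ 2 := by positivity
  have hxm : -1 < x / μ ^ 2 := by rwa [lt_div_iff₀ hm, neg_one_mul]
  simp only [hJ, fredholm_integrand_eq_rescaled (fun s => (FhypC α s).re) hm.ne']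
  refine ⟨?_, ?_⟩
  · have h := (integrableOn_Ioi_comp_mul_left_iff _ 0 (inv_pos.2 hm)).2
      ((mul_zero (μ ^ 2)⁻¹).symm ▸ integrableOn_mul_re_FhypC_div_sq h₀ h₁ hxm)
    exact h.const_mul _
  · rw [integral_const_mul, integral_comp_mul_left_Ioi (fun s => s / ((1 + s) ^ 2 *
        (1 + s + x / μ ^ 2)) * (FhypC α s).re) 0 (inv_pos.2 hm), mul_zero, inv_inv, smul_eq_mul,
      re_FhypC_eq_one_sub h₀ h₁ hsin hxm]
    field_simp

end Fredholm

lemma sin_pi_mul_half_add_I_mul_arcosh_div_pi {r : ℝ} (hr : 1 ≤ r) :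
    Complex.sin (π * (1 / 2 + Complex.I * (_root_.arcosh r / π))) = r := by
  have hπ : (π : ℂ) ≠ 0 := Complex.ofReal_ne_zero.2 pi_ne_zero
  have hcosh : Real.cosh (_root_.arcosh r) = r := Real.cosh_arcosh hr
  rw [mul_add, mul_left_comm, mul_div_cancel₀ _ hπ, mul_one_div, add_comm, mul_comm Complex.I,
    Complex.sin_add_pi_div_two, Complex.cos_mul_I, ← Complex.ofReal_cosh, hcosh]

lemma re_half_add_I_mul_div_pi (a : ℝ) : (1 / 2 + Complex.I * (a / π) : ℂ).re = 1 / 2 := by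
  rw [← Complex.ofReal_div, Complex.add_re, Complex.I_mul_re, Complex.ofReal_im]
  norm_num

theorem fredholm_solution_strong_coupling (lam : ℝ) (hlam : 1/π ≤ lam)
    (α : ℂ) (hα : α = 1/2 + Complex.I * (_root_.arcosh (lam * π) / π)) :
    (∀ x : ℝ, 0 ≤ x → (FhypC α x).im = 0) ∧
    ∀ μ : ℝ, 0 < μ →
      ∀ J : ℝ → ℝ, (∀ x, J x = x * (FhypC α (x / μ^2)).re) →
      ∀ x : ℝ, 0 ≤ x →
        IntegrableOn (fun t => J t / ((t + μ^2)^2 * (t + μ^2 + x))) (Set.Ioi 0) ∧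
        J x = x - lam * x^2 *
          ∫ t in Set.Ioi (0:ℝ), J t / ((t + μ^2)^2 * (t + μ^2 + x)) := by
  have hre : α.re = 1 / 2 := by rw [hα, re_half_add_I_mul_div_pi]
  obtain ⟨him, hJ⟩ := fredholm_solution_strong_coupling_general (by linarith) (by linarith)
    (hα ▸ sin_pi_mul_half_add_I_mul_arcosh_div_pi ((div_le_iff₀ pi_pos).1 hlam))
  exact ⟨fun x hx => him x (by linarith), fun μ hμ J hJμ x hx =>
    hJ μ hμ J hJμ x ((neg_neg_of_pos (pow_pos hμ 2)).trans_le hx)⟩
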